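/- arXiv:2402.11225 — 2 statements merged into one kernel-verified Lean document; each statement's English description precedes it below -/
import Mathlib

section
/- Let f : ℝ² → ℝ be of class C² satisfying (i) D²f(p)(q,q) > 0 for all p, q ∈ ℝ² with q ≠ 0, and (ii) there is a constant λ > 0 with D²f(p)(q,q) ≤ λ · (ln(2+|p|)/(1+|p|)) · |q|² for all p, q ∈ ℝ². Let u ∈ C²(ℝ²) be an entire solution of the equation div[Df(∇u)] = 0 on ℝ². If there exist constants 0 ≤ m < 1 and K > 0 such that |∂₁u(x)| ≤ K(|∂₂u(x)|^m + 1) for all x ∈ ℝ², then u is an affine function, i.e. there exist a, b, c ∈ ℝ with u(x₁,x₂) = a x₁ + b x₂ + c. -/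
open Real MeasureTheory Metric
open scoped ENNReal

noncomputable section

/-- `ℝ²` with its Euclidean structure. -/
abbrev E2 : Type := EuclideanSpace ℝ (Fin 2)

/-- The `i`-th standard basis vector of `ℝ²`. -/
def ee (i : Fin 2) : E2 := EuclideanSpace.single i 1

/-- The Hessian bilinear form `D²f(p)(q,q)`. -/
def Hess (f : E2 → ℝ) (p q : E2) : ℝ := iteratedFDeriv ℝ 2 f p ![q, q]

/-- The partial derivative `∂ᵢu(x)`. -/
def pd (u : E2 → ℝ) (i : Fin 2) (x : E2) : ℝ := fderiv ℝ u x (ee i)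

/-- The equation `div [Df(∇u)] = 0`, i.e. `∑ i, ∂ᵢ[(∂f/∂pᵢ)(∇u(x))] = 0` on `ℝ²`. -/
def solves (f u : E2 → ℝ) : Prop :=
  ∀ x : E2, ∑ i : Fin 2, fderiv ℝ (fun y => fderiv ℝ f (gradient u y) (ee i)) x (ee i) = 0

/-- The weight produced by testing with `arsinh w` stays bounded when `w` grows sublinearly. -/
theorem exists_arsinh_weight_bound {m L : ℝ} (hm0 : 0 ≤ m) (hm1 : m < 1) (hL : 0 ≤ L) :
    ∃ M : ℝ, 0 ≤ M ∧ ∀ t w : ℝ, 1 ≤ t → |w| ≤ L * t ^ m →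
      arsinh w ^ 2 * √(1 + w ^ 2) * (Real.log (1 + t) / t) ≤ M := by
  have hd : 0 < (1 - m) / 3 := by linarith
  set d := (1 - m) / 3 with hd_def
  set c := 2 * (1 + L) with hc_def
  have hc : 0 < c := by positivity
  refine ⟨(1 + L) * (c ^ (1 - m) / d ^ 3), by positivity, fun t w ht hw => ?_⟩
  have ht0 : 0 < t := by linarith
  have htm : 0 < t ^ m := rpow_pos_of_pos ht0 m
  have htm_one : 1 ≤ t ^ m := one_le_rpow ht hm0
  have htm_le : t ^ m ≤ t := by
    simpa using rpow_le_rpow_of_exponent_le ht hm1.le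
  set l := Real.log (c * t)
  have hl0 : 0 ≤ l := Real.log_nonneg (by nlinarith)
  have hS_abs : √(1 + w ^ 2) ≤ 1 + |w| := by
    rw [sqrt_le_left (by positivity)]
    nlinarith [abs_nonneg w, sq_abs w]
  have h_arsinh : |arsinh w| ≤ l := by
    have key : arsinh |w| ≤ l := by
      refine Real.log_le_log ?_ ?_
      · positivity
      · rw [sq_abs]
        nlinarith
    rw [← abs_of_nonneg (arsinh_nonneg_iff.2 (abs_nonneg w))] at key
    rcases abs_choice w with h | h <;> simpa [h] using key
  have h_log : Real.log (1 + t) ≤ l := Real.log_le_log (by linarith) (by nlinarith)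
  have h_log0 : 0 ≤ Real.log (1 + t) := Real.log_nonneg (by linarith)
  have h_rpow : l ≤ (c * t) ^ d / d := Real.log_le_rpow_div (by positivity) hd
  have h_cube : l ^ 3 ≤ (c * t) ^ (1 - m) / d ^ 3 := by
    calc l ^ 3 ≤ ((c * t) ^ d / d) ^ 3 := by gcongr
      _ = (c * t) ^ (1 - m) / d ^ 3 := by
        rw [div_pow, ← rpow_natCast ((c * t) ^ d), ← rpow_mul (by positivity)]
        congr 2
        rw [hd_def]
        push_cast
        ring
  have hS : √(1 + w ^ 2) ≤ (1 + L) * t ^ m := by linarith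
  have h_sq : arsinh w ^ 2 ≤ l ^ 2 := by
    rw [← sq_abs]
    gcongr
  have h_split : t ^ (1 - m) * t ^ m = t := by
    rw [← rpow_add ht0]
    simp
  calc arsinh w ^ 2 * √(1 + w ^ 2) * (Real.log (1 + t) / t)
      ≤ l ^ 2 * ((1 + L) * t ^ m) * (l / t) := by gcongr
    _ = (1 + L) * l ^ 3 * (t ^ m / t) := by ring
    _ ≤ (1 + L) * ((c * t) ^ (1 - m) / d ^ 3) * (t ^ m / t) := by gcongr
    _ = (1 + L) * (c ^ (1 - m) / d ^ 3) * (t ^ (1 - m) * t ^ m / t) := by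
      rw [mul_rpow hc.le ht0.le]
      ring
    _ = (1 + L) * (c ^ (1 - m) / d ^ 3) := by
      rw [h_split, div_self ht0.ne', mul_one]

/-- In the plane, points have zero capacity at infinity: there are cutoff functions equal to one
on a large ball whose Dirichlet energy is arbitrarily small. -/
theorem exists_cutoff_small_energy {R ε : ℝ} (hR : 0 < R) (hε : 0 < ε) :
    ∃ η : E2 → ℝ, ContDiff ℝ 1 η ∧ HasCompactSupport η ∧ (∀ x ∈ ball (0 : E2) R, η x = 1) ∧
      ∫ x, ‖fderiv ℝ η x‖ ^ 2 ≤ ε := by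
  let χ : ContDiffBump (0 : E2) := ⟨1, 2, one_pos, one_lt_two⟩
  have hχ : ContDiff ℝ 1 χ := χ.contDiff
  have hχ_supp : ∀ y : E2, fderiv ℝ χ y ≠ 0 → 1 < ‖y‖ ∧ ‖y‖ < 2 := by
    intro y hy
    constructor
    · by_contra! h
      refine hy (IsLocalMax.fderiv_eq_zero (Filter.Eventually.of_forall fun z => ?_))
      rw [χ.one_of_mem_closedBall (x := y) (by simpa using h)]
      exact χ.le_one
    · by_contra! h
      refine hy (IsLocalMin.fderiv_eq_zero (Filter.Eventually.of_forall fun z => ?_))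
      rw [χ.zero_of_le_dist (x := y) (by simpa using h)]
      exact χ.nonneg
  set I := ∫ x, ‖fderiv ℝ χ x‖ ^ 2 with hI
  have hI0 : 0 ≤ I := integral_nonneg fun x => by positivity
  obtain ⟨N, hN⟩ := exists_nat_gt (I / ε)
  have hN0 : (0 : ℝ) < N := lt_of_le_of_lt (by positivity) hN
  let s : ℕ → ℝ := fun k => (R * 2 ^ k)⁻¹
  have hs : ∀ k, 0 < s k := fun k => by positivity
  let θ : ℕ → E2 → ℝ := fun k x => χ (s k • x)
  have hθ : ∀ k, ContDiff ℝ 1 (θ k) := fun k => hχ.comp (contDiff_const_smul (s k))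
  have hθ_fderiv : ∀ k x, fderiv ℝ (θ k) x = s k • fderiv ℝ χ (s k • x) := fun k x =>
    fderiv_comp_smul (f := χ) (s k)
  have hθ_compact : ∀ k, HasCompactSupport (θ k) := fun k =>
    χ.hasCompactSupport.comp_smul (hs k).ne'
  have hθ_energy : ∀ k, ∫ x, ‖fderiv ℝ (θ k) x‖ ^ 2 = I := by
    intro k
    simp_rw [hθ_fderiv, norm_smul, mul_pow]
    rw [integral_const_mul, Measure.integral_comp_smul volume (fun y => ‖fderiv ℝ χ y‖ ^ 2)]
    have := (hs k).ne'
    simp [abs_of_pos (hs k), ← hI]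
    field_simp
  have hθ_supp : ∀ k x, fderiv ℝ (θ k) x ≠ 0 → R * 2 ^ k < ‖x‖ ∧ ‖x‖ < R * 2 ^ (k + 1) := by
    intro k x hx
    rw [hθ_fderiv] at hx
    have h := hχ_supp _ (right_ne_zero_of_smul hx)
    have hRk : 0 < R * 2 ^ k := by positivity
    rw [norm_smul, norm_of_nonneg (hs k).le, inv_mul_eq_div, lt_div_iff₀ hRk,
      div_lt_iff₀ hRk] at h
    constructor
    · linarith
    · rw [pow_succ]
      linarith
  have hθ_disjoint : ∀ j k x, fderiv ℝ (θ j) x ≠ 0 → fderiv ℝ (θ k) x ≠ 0 → j ≤ k := by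
    intro j k x hj hk
    by_contra! h
    have h1 := (hθ_supp j x hj).1
    have h2 := (hθ_supp k x hk).2
    have : R * 2 ^ (k + 1) ≤ R * 2 ^ j := by
      gcongr
      · norm_num
      · omega
    linarith
  have h_int : ∀ k, Integrable fun x => ‖fderiv ℝ (θ k) x‖ ^ 2 := by
    intro k
    have h1 : Continuous (fderiv ℝ (θ k)) := (hθ k).continuous_fderiv one_ne_zero
    refine Continuous.integrable_of_hasCompactSupport (by fun_prop) ?_
    exact ((hθ_compact k).fderiv ℝ).comp_left (g := fun L => ‖L‖ ^ 2) (by simp)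
  have h_sq : ∀ x, ‖∑ k ∈ Finset.range N, fderiv ℝ (θ k) x‖ ^ 2 ≤
      ∑ k ∈ Finset.range N, ‖fderiv ℝ (θ k) x‖ ^ 2 := by
    intro x
    by_cases h : ∃ k ∈ Finset.range N, fderiv ℝ (θ k) x ≠ 0
    · obtain ⟨k, hk, hne⟩ := h
      rw [Finset.sum_eq_single_of_mem k hk]
      · exact Finset.single_le_sum (f := fun k => ‖fderiv ℝ (θ k) x‖ ^ 2)
          (fun _ _ => by positivity) hk
      · intro j _ hjk
        by_contra hj
        exact hjk (le_antisymm (hθ_disjoint j k x hj hne) (hθ_disjoint k j x hne hj))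
    · push Not at h
      rw [Finset.sum_eq_zero h]
      simp
      positivity
  refine ⟨fun x => (N : ℝ)⁻¹ * ∑ k ∈ Finset.range N, θ k x, ?_, ?_, ?_, ?_⟩
  · exact contDiff_const.mul (ContDiff.sum fun k _ => hθ k)
  · refine HasCompactSupport.mul_left (HasCompactSupport.intro
      ((Finset.range N).isCompact_biUnion fun k _ => (hθ_compact k).isCompact) fun x hx => ?_)
    refine Finset.sum_eq_zero fun k hk => image_eq_zero_of_notMem_tsupport fun h => hx ?_
    exact Set.mem_biUnion hk h
  · intro x hx
    have : ∀ k ∈ Finset.range N, θ k x = 1 := by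
      intro k _
      refine χ.one_of_mem_closedBall ?_
      have hx' : ‖x‖ < R := by simpa using hx
      have h2 : R ≤ R * 2 ^ k := le_mul_of_one_le_right hR.le (one_le_pow₀ one_le_two)
      rw [mem_closedBall_zero_iff, norm_smul, norm_of_nonneg (hs k).le, inv_mul_eq_div]
      exact (div_le_one (by positivity)).2 (hx'.le.trans h2)
    simp only [Finset.sum_congr rfl this]
    simp [hN0.ne']
  · have hη : ∀ x, fderiv ℝ (fun x => (N : ℝ)⁻¹ * ∑ k ∈ Finset.range N, θ k x) x =
        (N : ℝ)⁻¹ • ∑ k ∈ Finset.range N, fderiv ℝ (θ k) x := by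
      intro x
      have hd : ∀ k ∈ Finset.range N, DifferentiableAt ℝ (θ k) x := fun k _ =>
        (hθ k).differentiable one_ne_zero x
      rw [fderiv_const_mul (by fun_prop), fderiv_fun_sum hd]
    calc ∫ x, ‖fderiv ℝ (fun x => (N : ℝ)⁻¹ * ∑ k ∈ Finset.range N, θ k x) x‖ ^ 2
        ≤ ∫ x, (N : ℝ)⁻¹ ^ 2 * ∑ k ∈ Finset.range N, ‖fderiv ℝ (θ k) x‖ ^ 2 := by
          refine integral_mono_of_nonneg (.of_forall fun x => by positivity)
            ((integrable_finsetSum _ fun k _ => h_int k).const_mul _) (.of_forall fun x => ?_)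
          simp only [hη, norm_smul, mul_pow, norm_inv, norm_of_nonneg hN0.le]
          gcongr
          exact h_sq x
      _ = (N : ℝ)⁻¹ * I := by
          rw [integral_const_mul, integral_finsetSum _ fun k _ => h_int k]
          simp only [hθ_energy]
          simp
          field_simp
      _ ≤ ε := by
          rw [div_lt_iff₀ hε] at hN
          rw [inv_mul_le_iff₀ hN0]
          exact hN.le

/-- Weak form of the equation `∑ i, ∂ᵢ Pᵢ = 0`. -/
theorem integral_mul_fderiv_eq_zero_of_divergence_free {P : E2 → E2 →L[ℝ] ℝ} (hP : ContDiff ℝ 1 P)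
    (hdiv : ∀ x, ∑ i, fderiv ℝ P x (ee i) (ee i) = 0) {φ : E2 → ℝ} (hφ : ContDiff ℝ 1 φ)
    (hc : HasCompactSupport φ) :
    ∫ x, ∑ i, P x (ee i) * fderiv ℝ φ x (ee i) = 0 := by
  have hP' : Continuous (fderiv ℝ P) := hP.continuous_fderiv one_ne_zero
  have hφ' : Continuous (fderiv ℝ φ) := hφ.continuous_fderiv one_ne_zero
  have hP0 := hP.continuous
  have hφ0 := hφ.continuous
  have hcφ' : ∀ v, HasCompactSupport fun x => fderiv ℝ φ x v := fun v =>
    (hc.fderiv ℝ).comp_left (g := fun L : E2 →L[ℝ] ℝ => L v) rfl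
  have h_fderiv : ∀ i x, fderiv ℝ (fun y => P y (ee i)) x (ee i) = fderiv ℝ P x (ee i) (ee i) := by
    intro i x
    rw [fderiv_clm_apply (hP.differentiable one_ne_zero x) (by fun_prop)]
    simp
  have h_int1 : ∀ i, Integrable fun x => P x (ee i) * fderiv ℝ φ x (ee i) := fun i =>
    Continuous.integrable_of_hasCompactSupport (by fun_prop) (hcφ' (ee i)).mul_left
  have h_int2 : ∀ i, Integrable fun x => fderiv ℝ P x (ee i) (ee i) * φ x := fun i =>
    Continuous.integrable_of_hasCompactSupport (by fun_prop) hc.mul_left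
  have h_parts : ∀ i, ∫ x, P x (ee i) * fderiv ℝ φ x (ee i) =
      -∫ x, fderiv ℝ P x (ee i) (ee i) * φ x := by
    intro i
    have := integral_mul_fderiv_eq_neg_fderiv_mul_of_integrable (μ := (volume : Measure E2))
      (f := fun y => P y (ee i)) (g := φ) (v := ee i)
      (by simpa only [h_fderiv] using h_int2 i) (h_int1 i)
      (Continuous.integrable_of_hasCompactSupport (by fun_prop) hc.mul_left)
      (fun x _ => (hP.differentiable one_ne_zero x).clm_apply (by fun_prop))
      (fun x _ => hφ.differentiable one_ne_zero x)
    simpa only [h_fderiv] using this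
  rw [integral_finsetSum _ fun i _ => h_int1 i]
  simp only [h_parts]
  rw [Finset.sum_neg_distrib, ← integral_finsetSum _ fun i _ => h_int2 i]
  simp [← Finset.sum_mul, hdiv]

/-- Weak form of the equation `∑ i, ∂ᵢ Pᵢ = 0` differentiated in the direction `v`. -/
theorem integral_fderiv_mul_fderiv_eq_zero_of_divergence_free {P : E2 → E2 →L[ℝ] ℝ}
    (hP : ContDiff ℝ 1 P) (hdiv : ∀ x, ∑ i, fderiv ℝ P x (ee i) (ee i) = 0) {φ : E2 → ℝ}
    (hφ : ContDiff ℝ 1 φ) (hc : HasCompactSupport φ) (v : E2) :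
    ∫ x, ∑ i, fderiv ℝ P x v (ee i) * fderiv ℝ φ x (ee i) = 0 := by
  have hP' : Continuous (fderiv ℝ P) := hP.continuous_fderiv one_ne_zero
  have hφ' : Continuous (fderiv ℝ φ) := hφ.continuous_fderiv one_ne_zero
  have hP0 := hP.continuous
  let F : ℝ → E2 → ℝ := fun s x => ∑ i, P (x + s • v) (ee i) * fderiv ℝ φ x (ee i)
  let F' : ℝ → E2 → ℝ := fun s x => ∑ i, fderiv ℝ P (x + s • v) v (ee i) * fderiv ℝ φ x (ee i)
  have hF : ∀ s, Continuous (F s) := fun s => by fun_prop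
  have hF' : Continuous fun z : ℝ × E2 => F' z.1 z.2 := by fun_prop
  have hF'_zero : ∀ s x, x ∉ tsupport φ → F' s x = 0 := by
    intro s x hx
    simp [F', fderiv_of_notMem_tsupport ℝ hx]
  have hF_zero : ∀ s x, x ∉ tsupport φ → F s x = 0 := by
    intro s x hx
    simp [F, fderiv_of_notMem_tsupport ℝ hx]
  obtain ⟨C, hC⟩ := ((isCompact_closedBall (0 : ℝ) 1).prod hc.isCompact).exists_bound_of_continuousOn
    hF'.continuousOn
  have h_const : ∀ s, ∫ x, F s x = 0 := by
    intro s
    have h_shift : ∀ x, fderiv ℝ (fun y => P (y + s • v)) x = fderiv ℝ P (x + s • v) := fun x =>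
      fderiv_comp_add_right (s • v)
    exact integral_mul_fderiv_eq_zero_of_divergence_free (P := fun x => P (x + s • v))
      (hP.comp (by fun_prop)) (fun x => by simpa only [h_shift] using hdiv (x + s • v)) hφ hc
  have h_deriv := hasDerivAt_integral_of_dominated_loc_of_deriv_le (μ := (volume : Measure E2))
    (F := F) (F' := F') (x₀ := 0) (bound := (tsupport φ).indicator fun _ => C)
    (ball_mem_nhds (0 : ℝ) one_pos)
    (.of_forall fun s => (hF s).aestronglyMeasurable)
    ((hF 0).integrable_of_hasCompactSupport (.intro hc fun x hx => hF_zero 0 x hx))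
    (by
      have : Continuous (F' 0) := by fun_prop
      exact this.aestronglyMeasurable)
    (.of_forall fun x s hs => by
      by_cases hx : x ∈ tsupport φ
      · rw [Set.indicator_of_mem hx]
        exact hC (s, x) ⟨ball_subset_closedBall hs, hx⟩
      · rw [Set.indicator_of_notMem hx, hF'_zero s x hx, norm_zero])
    ((integrable_indicator_iff hc.isCompact.measurableSet).2
      (integrableOn_const hc.isCompact.measure_lt_top.ne))
    (.of_forall fun x s _ => by
      refine HasDerivAt.fun_sum fun i _ => HasDerivAt.mul_const ?_ _
      have h1 : HasDerivAt (fun s : ℝ => x + s • v) v s := by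
        simpa using ((hasDerivAt_id s).smul_const v).const_add x
      have h2 := (hP.differentiable one_ne_zero (x + s • v)).hasFDerivAt.comp_hasDerivAt s h1
      simpa using h2.clm_apply (hasDerivAt_const s (ee i)))
  have h_zero := h_deriv.2.unique (by simpa only [h_const] using hasDerivAt_const (0 : ℝ) (0 : ℝ))
  simpa [F'] using h_zero

/-- Liouville theorem for divergence-form equations in the plane: if `div (B ∇w) = 0` weakly and
the growth of `w` is compensated by the decay of `B`, then `B` vanishes on `∇w`. -/
theorem bilin_gradient_eq_zero_of_weak_solution {B : E2 → E2 →L[ℝ] E2 →L[ℝ] ℝ} (hB : Continuous B)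
    (hsymm : ∀ x a b, B x a b = B x b a) (hnonneg : ∀ x a, 0 ≤ B x a a) {w : E2 → ℝ}
    (hw : ContDiff ℝ 1 w)
    (hweak : ∀ φ : E2 → ℝ, ContDiff ℝ 1 φ → HasCompactSupport φ →
      ∫ x, B x (gradient w x) (gradient φ x) = 0)
    {M : ℝ} (hM0 : 0 ≤ M)
    (hM : ∀ x q, arsinh (w x) ^ 2 * √(1 + w x ^ 2) * B x q q ≤ M * ‖q‖ ^ 2) (x₀ : E2) :
    B x₀ (gradient w x₀) (gradient w x₀) = 0 := by
  have hS : ∀ x, 0 < √(1 + w x ^ 2) := fun x => by positivity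
  have h_grad : ∀ φ : E2 → ℝ, ContDiff ℝ 1 φ → Continuous (gradient φ) := fun φ hφ =>
    (InnerProductSpace.toDual ℝ E2).symm.continuous.comp (hφ.continuous_fderiv one_ne_zero)
  have hw_grad := h_grad w hw
  have hw0 := hw.continuous
  let Φ : E2 → ℝ := fun x => (√(1 + w x ^ 2))⁻¹ * B x (gradient w x) (gradient w x)
  have hΦ : Continuous Φ := by
    have : Continuous fun x => (√(1 + w x ^ 2))⁻¹ :=
      Continuous.inv₀ (by fun_prop) fun x => (hS x).ne'
    fun_prop
  have hΦ0 : ∀ x, 0 ≤ Φ x := fun x => mul_nonneg (by positivity) (hnonneg x _)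
  have h_energy : ∀ η : E2 → ℝ, ContDiff ℝ 1 η → HasCompactSupport η →
      ∫ x, η x ^ 2 * Φ x ≤ 4 * M * ∫ x, ‖fderiv ℝ η x‖ ^ 2 := by
    intro η hη hηc
    have hη_grad := h_grad η hη
    have hη0 := hη.continuous
    have hη' := hη.continuous_fderiv one_ne_zero
    have hφ : ContDiff ℝ 1 fun x => η x ^ 2 * arsinh (w x) := (hη.pow 2).mul hw.arsinh
    have hφc : HasCompactSupport fun x => η x ^ 2 * arsinh (w x) :=
      (hηc.comp_left (g := fun r : ℝ => r ^ 2) (by simp)).mul_right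
    have h_gradφ : ∀ x, gradient (fun x => η x ^ 2 * arsinh (w x)) x =
        (2 * η x * arsinh (w x)) • gradient η x +
          (η x ^ 2 * (√(1 + w x ^ 2))⁻¹) • gradient w x := by
      intro x
      have h1 := (hη.differentiable one_ne_zero x).hasFDerivAt
      have h2 := (hw.differentiable one_ne_zero x).hasFDerivAt
      have h3 : fderiv ℝ (fun x => η x ^ 2 * arsinh (w x)) x =
          (2 * η x * arsinh (w x)) • fderiv ℝ η x +
            (η x ^ 2 * (√(1 + w x ^ 2))⁻¹) • fderiv ℝ w x := by
        refine ((h1.pow 2).mul h2.arsinh).fderiv.trans ?_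
        ext v
        simp
        ring
      simp only [gradient, h3, map_add, map_smul]
    have h_point : ∀ x, 1 / 2 * (η x ^ 2 * Φ x) - 2 * M * ‖fderiv ℝ η x‖ ^ 2 ≤
        B x (gradient w x) (gradient (fun x => η x ^ 2 * arsinh (w x)) x) := by
      intro x
      rw [h_gradφ, ← toDual_gradient (f := η), LinearIsometryEquiv.norm_map]
      have h1 := hM x (gradient η x)
      have h2 := hnonneg x ((η x * (√(1 + w x ^ 2))⁻¹) • gradient w x +
        (2 * arsinh (w x)) • gradient η x)
      simp only [map_add, map_smul, add_apply, smul_apply,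
        smul_eq_mul, Φ, hsymm x (gradient η x) (gradient w x)] at h1 h2 ⊢
      have hs := hS x
      generalize √(1 + w x ^ 2) = s at *
      have h3 := mul_nonneg hs.le h2
      have h4 : s * s⁻¹ = 1 := mul_inv_cancel₀ hs.ne'
      generalize s⁻¹ = r at *
      linear_combination h3 / 2 + 2 * h1 + (r * η x ^ 2 * B x (gradient w x) (gradient w x) / 2 +
        2 * η x * arsinh (w x) * B x (gradient w x) (gradient η x)) * h4
    have hc_sq : Integrable fun x => η x ^ 2 * Φ x :=
      Continuous.integrable_of_hasCompactSupport (by fun_prop)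
        (hηc.comp_left (g := fun r : ℝ => r ^ 2) (by simp)).mul_right
    have hc_grad : Integrable fun x => ‖fderiv ℝ η x‖ ^ 2 :=
      Continuous.integrable_of_hasCompactSupport (by fun_prop)
        ((hηc.fderiv ℝ).comp_left (g := fun L => ‖L‖ ^ 2) (by simp))
    have hc_weak : Integrable fun x =>
        B x (gradient w x) (gradient (fun x => η x ^ 2 * arsinh (w x)) x) := by
      have := h_grad _ hφ
      refine Continuous.integrable_of_hasCompactSupport (by fun_prop)
        (HasCompactSupport.intro hφc fun x hx => ?_)
      simp [gradient, fderiv_of_notMem_tsupport ℝ hx]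
    have := integral_mono ((hc_sq.const_mul (1 / 2)).sub (hc_grad.const_mul (2 * M))) hc_weak
      h_point
    rw [hweak _ hφ hφc] at this
    simp only [Pi.sub_apply] at this
    rw [integral_sub (hc_sq.const_mul _) (hc_grad.const_mul _), integral_const_mul,
      integral_const_mul] at this
    linarith
  by_contra h_ne
  have hΦ_ne : Φ x₀ ≠ 0 := mul_ne_zero (inv_ne_zero (hS x₀).ne') h_ne
  let ψ : ContDiffBump x₀ := ⟨1 / 2, 1, by norm_num, by norm_num⟩
  have hψ0 := ψ.continuous
  have hψc : HasCompactSupport fun x => ψ x * Φ x := ψ.hasCompactSupport.mul_right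
  have h_pos : 0 < ∫ x, ψ x * Φ x :=
    Continuous.integral_pos_of_hasCompactSupport_nonneg_nonzero (x := x₀) (by fun_prop) hψc
      (fun x => mul_nonneg ψ.nonneg (hΦ0 x))
      (mul_ne_zero (by rw [ψ.one_of_mem_closedBall (by simp [ψ.rIn_pos.le])]; simp) hΦ_ne)
  obtain ⟨η, hη, hηc, hη_one, hη_small⟩ := exists_cutoff_small_energy (R := ‖x₀‖ + 1)
    (ε := (∫ x, ψ x * Φ x) / (4 * M + 1)) (by positivity) (by positivity)
  have hη0 := hη.continuous
  have h_le : ∫ x, ψ x * Φ x ≤ ∫ x, η x ^ 2 * Φ x := by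
    refine integral_mono (Continuous.integrable_of_hasCompactSupport (by fun_prop) hψc)
      (Continuous.integrable_of_hasCompactSupport (by fun_prop)
        (hηc.comp_left (g := fun r : ℝ => r ^ 2) (by simp)).mul_right) fun x => ?_
    refine mul_le_mul_of_nonneg_right ?_ (hΦ0 x)
    by_cases hx : x ∈ ball x₀ 1
    · rw [hη_one x ?_]
      · simpa using ψ.le_one
      · rw [mem_ball_iff_norm] at hx
        rw [mem_ball_zero_iff]
        linarith [norm_le_norm_add_norm_sub' x x₀]
    · rw [ψ.zero_of_le_dist (by simpa using hx)]
      positivity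
  have h_lt : 4 * M * ∫ x, ‖fderiv ℝ η x‖ ^ 2 < ∫ x, ψ x * Φ x := by
    calc 4 * M * ∫ x, ‖fderiv ℝ η x‖ ^ 2 ≤ 4 * M * ((∫ x, ψ x * Φ x) / (4 * M + 1)) := by gcongr
      _ < ∫ x, ψ x * Φ x := by
        rw [← mul_div_assoc, div_lt_iff₀ (by positivity)]
        linarith
  linarith [h_energy η hη hηc]

theorem gradient_eq_sum_ee (φ : E2 → ℝ) (x : E2) :
    gradient φ x = ∑ i, fderiv ℝ φ x (ee i) • ee i := by
  have h : ∀ i, fderiv ℝ φ x (ee i) = gradient φ x i := by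
    intro i
    rw [← toDual_gradient, InnerProductSpace.toDual_apply_apply, ee,
      EuclideanSpace.inner_single_right]
    simp
  ext j
  fin_cases j <;> simp [h] <;> simp [ee]

theorem contDiff_gradient {u : E2 → ℝ} (hu : ContDiff ℝ 2 u) : ContDiff ℝ 1 (gradient u) :=
  (InnerProductSpace.toDual ℝ E2).symm.contDiff.comp
    (hu.fderiv_right (m := 1) (by norm_num))

/-- Symmetry of second derivatives in terms of partial derivatives. -/
theorem fderiv_fderiv_ee {u : E2 → ℝ} (hu : ContDiff ℝ 2 u) (i : Fin 2) (x : E2) :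
    fderiv ℝ (fderiv ℝ u) x (ee i) = fderiv ℝ (pd u i) x := by
  have hu' : DifferentiableAt ℝ (fderiv ℝ u) x :=
    (hu.fderiv_right (m := 1) (by norm_num)).differentiable one_ne_zero x
  have h_symm : IsSymmSndFDerivAt ℝ u x := hu.contDiffAt.isSymmSndFDerivAt (by simp)
  ext v
  have h_pd : fderiv ℝ (fun y => fderiv ℝ u y (ee i)) x v = fderiv ℝ (fderiv ℝ u) x v (ee i) := by
    rw [fderiv_clm_apply hu' (by fun_prop)]
    simp
  exact (h_symm.eq (ee i) v).trans h_pd.symm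

/-- Differentiating the gradient amounts to taking the gradient of the partial derivatives. -/
theorem fderiv_gradient_ee {u : E2 → ℝ} (hu : ContDiff ℝ 2 u) (i : Fin 2) (x : E2) :
    fderiv ℝ (gradient u) x (ee i) = gradient (pd u i) x := by
  have h : fderiv ℝ (gradient u) x (ee i) =
      (InnerProductSpace.toDual ℝ E2).symm (fderiv ℝ (fderiv ℝ u) x (ee i)) :=
    DFunLike.congr_fun ((InnerProductSpace.toDual ℝ E2).symm.toContinuousLinearEquiv.comp_fderiv
      (f := fderiv ℝ u) (x := x)) (ee i)
  rw [h, fderiv_fderiv_ee hu, gradient]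

theorem exists_affine_of_fderiv_gradient_eq_zero {u : E2 → ℝ} (hu : ContDiff ℝ 2 u)
    (h : ∀ x, fderiv ℝ (gradient u) x = 0) :
    ∃ a b c : ℝ, ∀ x : E2, u x = a * x 0 + b * x 1 + c := by
  have h_const : ∀ x, gradient u x = gradient u 0 := fun x =>
    is_const_of_fderiv_eq_zero ((contDiff_gradient hu).differentiable one_ne_zero) h x 0
  set p := gradient u 0
  have h_lin : ∀ x, u x - inner ℝ p x = u 0 - inner ℝ p (0 : E2) := by
    refine fun x => is_const_of_fderiv_eq_zero (𝕜 := ℝ) (f := fun x => u x - inner ℝ p x) ?_ ?_ x 0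
    · exact (hu.differentiable two_ne_zero).sub (InnerProductSpace.toDual ℝ E2 p).differentiable
    · intro y
      have h1 : HasFDerivAt (fun x : E2 => inner ℝ p x) (InnerProductSpace.toDual ℝ E2 p) y :=
        (InnerProductSpace.toDual ℝ E2 p).hasFDerivAt
      rw [fderiv_fun_sub (hu.differentiable two_ne_zero y) h1.differentiableAt, h1.fderiv,
        ← toDual_gradient, h_const, sub_self]
  refine ⟨p 0, p 1, u 0, fun x => ?_⟩
  have := h_lin x
  simp [PiLp.inner_apply, Fin.sum_univ_two] at this
  linarith

theorem statement0 (f u : E2 → ℝ)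
    (hf : ContDiff ℝ 2 f)
    (hpos : ∀ p q : E2, q ≠ 0 → 0 < Hess f p q)
    (lam : ℝ) (hlam : 0 < lam)
    (hgrow : ∀ p q : E2, Hess f p q ≤ lam * (Real.log (2 + ‖p‖) / (1 + ‖p‖)) * ‖q‖ ^ 2)
    (hu : ContDiff ℝ 2 u) (heq : solves f u)
    (m K : ℝ) (hm0 : 0 ≤ m) (hm1 : m < 1) (hK : 0 < K)
    (hbd : ∀ x : E2, |pd u 0 x| ≤ K * (|pd u 1 x| ^ m + 1)) :
    ∃ a b c : ℝ, ∀ x : E2, u x = a * x 0 + b * x 1 + c := by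
  have hf' : ContDiff ℝ 1 (fderiv ℝ f) := hf.fderiv_right (by norm_num)
  have hg := contDiff_gradient hu
  let B : E2 → E2 →L[ℝ] E2 →L[ℝ] ℝ := fun x => fderiv ℝ (fderiv ℝ f) (gradient u x)
  let P : E2 → E2 →L[ℝ] ℝ := fun x => fderiv ℝ f (gradient u x)
  have hHess : ∀ x q, Hess f (gradient u x) q = B x q q := fun x q => by
    simp [Hess, iteratedFDeriv_two_apply, B]
  have hB : Continuous B := (hf'.continuous_fderiv one_ne_zero).comp hg.continuous
  have hB_symm : ∀ x a b, B x a b = B x b a := fun x a b =>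
    (hf.contDiffAt.isSymmSndFDerivAt (x := gradient u x) (by simp)).eq a b
  have hB_pos : ∀ x q, q ≠ 0 → 0 < B x q q := fun x q hq => hHess x q ▸ hpos _ q hq
  have hB_nonneg : ∀ x q, 0 ≤ B x q q := fun x q => by
    rcases eq_or_ne q 0 with rfl | hq
    · simp
    · exact (hB_pos x q hq).le
  have hP : ContDiff ℝ 1 P := hf'.comp hg
  have hP_fderiv : ∀ x i, fderiv ℝ P x (ee i) = B x (gradient (pd u i) x) := by
    intro x i
    rw [← fderiv_gradient_ee hu]
    have := fderiv_comp x (hf'.differentiable one_ne_zero (gradient u x))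
      (hg.differentiable one_ne_zero x)
    exact DFunLike.congr_fun this (ee i)
  have hdiv : ∀ x, ∑ i, fderiv ℝ P x (ee i) (ee i) = 0 := by
    intro x
    rw [← heq x]
    refine Finset.sum_congr rfl fun i _ => ?_
    rw [fderiv_clm_apply (hP.differentiable one_ne_zero x) (by fun_prop)]
    simp [P]
  have hw : ∀ i, ContDiff ℝ 1 (pd u i) := fun i =>
    (hu.fderiv_right (m := 1) (by norm_num)).clm_apply contDiff_const
  have hweak : ∀ φ : E2 → ℝ, ContDiff ℝ 1 φ → HasCompactSupport φ →
      ∫ x, B x (gradient (pd u 0) x) (gradient φ x) = 0 := by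
    intro φ hφ hc
    rw [← integral_fderiv_mul_fderiv_eq_zero_of_divergence_free hP hdiv hφ hc (ee 0)]
    refine integral_congr_ae (.of_forall fun x => ?_)
    simp only [hP_fderiv, gradient_eq_sum_ee φ x, map_sum, map_smul, smul_eq_mul]
    exact Finset.sum_congr rfl fun i _ => mul_comm _ _
  obtain ⟨M, hM0, hM⟩ := exists_arsinh_weight_bound hm0 hm1 (L := 2 * K) (by positivity)
  have hweight : ∀ x q, arsinh (pd u 0 x) ^ 2 * √(1 + pd u 0 x ^ 2) * B x q q ≤
      M * lam * ‖q‖ ^ 2 := by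
    intro x q
    have h1 : |pd u 1 x| ≤ 1 + ‖gradient u x‖ := by
      have h : |pd u 1 x| ≤ ‖fderiv ℝ u x‖ * ‖ee 1‖ := (fderiv ℝ u x).le_opNorm (ee 1)
      rw [← toDual_gradient, LinearIsometryEquiv.norm_map] at h
      rw [ee, PiLp.norm_single, norm_one, mul_one] at h
      linarith
    have ht : 1 ≤ 1 + ‖gradient u x‖ := by simp
    have h2 : |pd u 0 x| ≤ 2 * K * (1 + ‖gradient u x‖) ^ m := by
      calc |pd u 0 x| ≤ K * (|pd u 1 x| ^ m + 1) := hbd x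
        _ ≤ K * ((1 + ‖gradient u x‖) ^ m + (1 + ‖gradient u x‖) ^ m) := by
          gcongr
          exact one_le_rpow ht hm0
        _ = 2 * K * (1 + ‖gradient u x‖) ^ m := by ring
    have h3 := hM _ _ ht h2
    rw [← add_assoc, one_add_one_eq_two] at h3
    calc arsinh (pd u 0 x) ^ 2 * √(1 + pd u 0 x ^ 2) * B x q q
        ≤ arsinh (pd u 0 x) ^ 2 * √(1 + pd u 0 x ^ 2) *
          (lam * (Real.log (2 + ‖gradient u x‖) / (1 + ‖gradient u x‖)) * ‖q‖ ^ 2) := by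
          gcongr
          exact hHess x q ▸ hgrow _ q
      _ = arsinh (pd u 0 x) ^ 2 * √(1 + pd u 0 x ^ 2) *
          (Real.log (2 + ‖gradient u x‖) / (1 + ‖gradient u x‖)) * (lam * ‖q‖ ^ 2) := by ring
      _ ≤ M * (lam * ‖q‖ ^ 2) := by gcongr
      _ = M * lam * ‖q‖ ^ 2 := by ring
  have h_grad0 : ∀ x, gradient (pd u 0) x = 0 := by
    intro x
    by_contra h
    exact (hB_pos x _ h).ne' (bilin_gradient_eq_zero_of_weak_solution hB hB_symm hB_nonneg (hw 0)
      hweak (by positivity) hweight x)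
  have h_grad1 : ∀ x, gradient (pd u 1) x = 0 := by
    intro x
    have h_mixed : fderiv ℝ (pd u 1) x (ee 0) = 0 := by
      have h_symm : IsSymmSndFDerivAt ℝ u x := hu.contDiffAt.isSymmSndFDerivAt (by simp)
      rw [← fderiv_fderiv_ee hu, h_symm.eq (ee 1) (ee 0), fderiv_fderiv_ee hu, ← toDual_gradient,
        h_grad0]
      simp
    have h := hdiv x
    have h_sum : gradient (pd u 1) x = fderiv ℝ (pd u 1) x (ee 1) • ee 1 := by
      rw [gradient_eq_sum_ee, Fin.sum_univ_two, h_mixed, zero_smul, zero_add]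
    simp only [Fin.sum_univ_two, hP_fderiv, h_grad0, map_zero, zero_apply, zero_add] at h
    rw [h_sum, map_smul, smul_apply, smul_eq_mul] at h
    have h_ee : ee 1 ≠ 0 := by simp [ee]
    rw [h_sum, (mul_eq_zero.1 h).resolve_right (hB_pos x _ h_ee).ne', zero_smul]
  refine exists_affine_of_fderiv_gradient_eq_zero hu fun x => ?_
  ext1 v
  have hv : v = v 0 • ee 0 + v 1 • ee 1 := by
    ext j
    fin_cases j <;> simp [ee]
  rw [hv, map_add, map_smul, map_smul, fderiv_gradient_ee hu, fderiv_gradient_ee hu, h_grad0,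
    h_grad1]
  simp
end
end

section
/- Let f : ℝ² → ℝ be of class C² satisfying (i) D²f(p)(q,q) > 0 for all p, q ∈ ℝ² with q ≠ 0, and (ii) there is a constant Λ > 0 with |D²f(p)| ≤ Λ/(1+|p|) for all p ∈ ℝ². Let u ∈ C²(ℝ²) be an entire solution of div[Df(∇u)] = 0 on ℝ². If there is a constant K > 0 such that |∂₁u(x)| · ln²(1+|∂₁u(x)|) ≤ K(|∂₂u(x)| + 1) for all x ∈ ℝ², then u is an affine function, i.e. there exist a, b, c ∈ ℝ with u(x₁,x₂) = a x₁ + b x₂ + c. -/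
open Real MeasureTheory Metric
open scoped ENNReal

noncomputable section

section MixedDerivatives

open scoped Convolution Topology

variable {E : Type*} [NormedAddCommGroup E] [NormedSpace ℝ E] [FiniteDimensional ℝ E]
  [MeasurableSpace E] [BorelSpace E] {μ : Measure E} [μ.IsAddHaarMeasure]

theorem convolution_mul_comm (f g : E → ℝ) :
    f ⋆[ContinuousLinearMap.mul ℝ ℝ, μ] g = g ⋆[ContinuousLinearMap.mul ℝ ℝ, μ] f := by
  conv_rhs => rw [← convolution_flip]
  congr 1
  ext
  simp

theorem fderiv_convolution_mul_apply {f g : E → ℝ} (hf : Continuous f) (hg : ContDiff ℝ 1 g)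
    (hgc : HasCompactSupport g) (x a : E) :
    fderiv ℝ (f ⋆[ContinuousLinearMap.mul ℝ ℝ, μ] g) x a =
      (f ⋆[ContinuousLinearMap.mul ℝ ℝ, μ] fun t => fderiv ℝ g t a) x := by
  rw [(hgc.hasFDerivAt_convolution_right _ hf.locallyIntegrable hg x).fderiv,
    convolution_precompR_apply _ hf.locallyIntegrable (hgc.fderiv ℝ)
      (hg.continuous_fderiv one_ne_zero)]

theorem convolution_mul_fderiv_comm {f g : E → ℝ} (hf : ContDiff ℝ 1 f)
    (hfc : HasCompactSupport f) (hg : ContDiff ℝ 1 g) (hgc : HasCompactSupport g) (x a b : E) :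
    ((fun t => fderiv ℝ f t a) ⋆[ContinuousLinearMap.mul ℝ ℝ, μ] fun t => fderiv ℝ g t b) x =
      ((fun t => fderiv ℝ f t b) ⋆[ContinuousLinearMap.mul ℝ ℝ, μ] fun t => fderiv ℝ g t a) x := by
  have hf' : Continuous fun t => fderiv ℝ f t a :=
    (hf.continuous_fderiv one_ne_zero).clm_apply continuous_const
  have hg' : Continuous fun t => fderiv ℝ g t a :=
    (hg.continuous_fderiv one_ne_zero).clm_apply continuous_const
  have key : ((fun t => fderiv ℝ f t a) ⋆[ContinuousLinearMap.mul ℝ ℝ, μ] g) =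
      (fun t => fderiv ℝ g t a) ⋆[ContinuousLinearMap.mul ℝ ℝ, μ] f := by
    ext y
    rw [convolution_mul_comm, ← fderiv_convolution_mul_apply hg.continuous hf hfc,
      convolution_mul_comm, fderiv_convolution_mul_apply hf.continuous hg hgc,
      convolution_mul_comm]
  rw [← fderiv_convolution_mul_apply hf' hg hgc, key, fderiv_convolution_mul_apply hg' hf hfc,
    convolution_mul_comm]

/-- Mixed derivatives of two `C¹` functions, one of which has compact support, may be exchanged
under the integral, although neither function need have second derivatives. -/
theorem integral_fderiv_mul_fderiv_comm {v φ : E → ℝ} (hv : ContDiff ℝ 1 v)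
    (hφ : ContDiff ℝ 1 φ) (hφc : HasCompactSupport φ) (a b : E) :
    ∫ x, fderiv ℝ v x a * fderiv ℝ φ x b ∂μ = ∫ x, fderiv ℝ v x b * fderiv ℝ φ x a ∂μ := by
  obtain ⟨R, hR, hsub⟩ := hφc.isCompact.isBounded.subset_ball_lt 0 0
  let χ : ContDiffBump (0 : E) := ⟨R, R + 1, hR, by linarith⟩
  have hw : ContDiff ℝ 1 fun x => χ x * v x := χ.contDiff.mul hv
  have hwc : HasCompactSupport fun x => χ x * v x := χ.hasCompactSupport.mul_right
  have hcut : ∀ x c d, fderiv ℝ v x c * fderiv ℝ φ x d =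
      fderiv ℝ (fun x => χ x * v x) x c * fderiv ℝ φ x d := by
    intro x c d
    by_cases hx : x ∈ tsupport φ
    · have h1 : (fun x => χ x * v x) =ᶠ[𝓝 x] v := by
        filter_upwards [χ.eventuallyEq_one_of_mem_ball (hsub hx)] with y hy
        simp [hy]
      rw [h1.fderiv_eq]
    · rw [fderiv_of_notMem_tsupport ℝ hx]
      simp
  have hneg : ∀ x c, fderiv ℝ (fun y => φ (-y)) (-x) c = -fderiv ℝ φ x c := by
    intro x c
    have h1 : HasFDerivAt φ (fderiv ℝ φ x) (-(-x)) := by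
      rw [neg_neg]
      exact (hφ.differentiable one_ne_zero x).hasFDerivAt
    have h2 : HasFDerivAt (fun y => φ (-y)) _ (-x) :=
      h1.comp (-x) (hasFDerivAt_id (𝕜 := ℝ) (-x)).fun_neg
    rw [h2.fderiv]
    simp
  have h := convolution_mul_fderiv_comm (μ := μ) hw hwc (hφ.comp contDiff_neg)
    (hφc.comp_homeomorph (Homeomorph.neg E)) 0 a b
  simp only [convolution_def, zero_sub, ContinuousLinearMap.mul_apply', Function.comp_def, hneg,
    mul_neg, integral_neg, neg_inj] at h
  simpa only [hcut] using h

end MixedDerivatives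

/-- A hole-filling inequality valid for all weights forces the first term to vanish. -/
theorem nonpos_of_hole_filling {a : ℕ → ℝ} {C : ℝ} (hC : 0 ≤ C) (ha : ∀ n, 0 ≤ a n)
    (hmono : Monotone a)
    (h : ∀ n, ∀ δ : ℝ, 0 ≤ δ → a n ≤ δ * (a (n + 1) - a n) + C / (1 + δ)) : a 0 ≤ 0 := by
  by_contra! h0
  have hbound : ∀ n, a n ≤ C := fun n => by simpa using h n 0 le_rfl
  set δ := 2 * C / a 0 with hδ
  have hδ0 : 0 ≤ δ := by positivity
  have hhalf : C / (1 + δ) ≤ a 0 / 2 := by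
    rw [div_le_iff₀ (by positivity), hδ]
    field_simp
    nlinarith
  have hsum : ∀ n : ℕ, n * (a 0 / 2) ≤ δ * a n := by
    intro n
    induction n with
    | zero => simpa using mul_nonneg hδ0 (ha 0)
    | succ n ih =>
      have h1 := h n δ hδ0
      have h2 := hmono (Nat.zero_le n)
      push_cast
      nlinarith
  obtain ⟨n, hn⟩ := exists_nat_gt (δ * C / (a 0 / 2))
  rw [div_lt_iff₀ (by positivity)] at hn
  nlinarith [hsum n, mul_le_mul_of_nonneg_left (hbound n) hδ0]

theorem abs_arsinh_le (t : ℝ) : |arsinh t| ≤ log 2 + log (1 + |t|) := by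
  have h : ∀ s : ℝ, arsinh s ≤ log 2 + log (1 + |s|) := by
    intro s
    rw [← Real.log_mul (by norm_num) (by positivity), Real.arsinh]
    have hs : √(1 + s ^ 2) ≤ 1 + |s| := by
      rw [Real.sqrt_le_left (by positivity)]
      nlinarith [abs_nonneg s, sq_abs s]
    have hpos : 0 < s + √(1 + s ^ 2) := by rw [← Real.exp_arsinh]; positivity
    exact Real.log_le_log hpos (by linarith [le_abs_self s, abs_nonneg s])
  rw [abs_le]
  have := h (-t)
  rw [Real.arsinh_neg, abs_neg] at this
  exact ⟨by linarith, h t⟩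

/-- The reciprocal of the derivative of `arctan ∘ arsinh` grows at most like `t log² t`. -/
theorem one_add_arsinh_sq_mul_sqrt_le (t : ℝ) :
    (1 + arsinh t ^ 2) * √(1 + t ^ 2) ≤ 11 + 7 * (|t| * log (1 + |t|) ^ 2) := by
  have ht := abs_nonneg t
  set s := |t|
  set l := log (1 + s)
  have hl0 : 0 ≤ l := Real.log_nonneg (by linarith)
  have hsq : arsinh t ^ 2 ≤ 2 + 2 * l ^ 2 := by
    have h1 := abs_arsinh_le t
    have h2 : log 2 ≤ 1 := by linarith [Real.log_two_lt_d9]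
    have h3 : |arsinh t| ≤ 1 + l := by linarith
    rw [← sq_abs]
    nlinarith [abs_nonneg (arsinh t), sq_nonneg (1 - l)]
  have hroot : √(1 + t ^ 2) ≤ 1 + s := by
    rw [Real.sqrt_le_left (by positivity)]
    nlinarith [sq_abs t]
  have hs : s ≤ 2 + s * l ^ 2 := by
    rcases le_total s 2 with h | h
    · nlinarith [mul_nonneg ht (sq_nonneg l)]
    · have : 1 ≤ l := by
        rw [Real.le_log_iff_exp_le (by linarith)]
        linarith [Real.exp_one_lt_d9]
      nlinarith [mul_le_mul_of_nonneg_left (one_le_pow₀ this (n := 2)) ht]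
  have hl : l ^ 2 ≤ 1 + s * l ^ 2 := by
    rcases le_total s 1 with h | h
    · have : l ≤ s := by
        have := Real.log_le_sub_one_of_pos (show 0 < 1 + s by linarith)
        linarith
      nlinarith [mul_nonneg ht (sq_nonneg l)]
    · nlinarith [sq_nonneg l]
  calc (1 + arsinh t ^ 2) * √(1 + t ^ 2) ≤ (3 + 2 * l ^ 2) * (1 + s) := by
        exact mul_le_mul (by linarith) hroot (by positivity) (by positivity)
    _ ≤ 11 + 7 * (s * l ^ 2) := by nlinarith

theorem norm_gradient (h : E2 → ℝ) (x : E2) : ‖gradient h x‖ = ‖fderiv ℝ h x‖ := by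
  rw [gradient, LinearIsometryEquiv.norm_map]

theorem fderiv_apply_ee (h : E2 → ℝ) (x : E2) (i : Fin 2) :
    fderiv ℝ h x (ee i) = gradient h x i := by
  rw [← inner_gradient_left, ee, EuclideanSpace.inner_single_right]
  simp

theorem continuous_gradient {h : E2 → ℝ} (hh : ContDiff ℝ 1 h) : Continuous (gradient h) :=
  (InnerProductSpace.toDual ℝ E2).symm.continuous.comp (hh.continuous_fderiv one_ne_zero)

theorem eq_coord_smul_ee (q : E2) : q = q 0 • ee 0 + q 1 • ee 1 := by
  ext i
  fin_cases i <;> simp [ee]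

/-- Cutoff functions at every scale in the plane whose Dirichlet energy does not depend on the
scale. -/
theorem exists_cutoff_energy : ∃ D : ℝ, 0 ≤ D ∧ ∀ R : ℝ, 0 < R → ∃ η : E2 → ℝ,
    ContDiff ℝ 1 η ∧ HasCompactSupport η ∧ (∀ x, η x ^ 2 ≤ 1) ∧ (∀ x ∈ ball (0 : E2) R, η x = 1) ∧
      (∀ x ∉ ball (0 : E2) (2 * R), η x = 0) ∧ ∫ x, ‖gradient η x‖ ^ 2 = D := by
  let χ : ContDiffBump (0 : E2) := ⟨1, 2, one_pos, one_lt_two⟩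
  refine ⟨∫ x, ‖gradient χ x‖ ^ 2, integral_nonneg fun x => by positivity, fun R hR => ?_⟩
  refine ⟨fun x => χ (R⁻¹ • x), χ.contDiff.comp (contDiff_const_smul _),
    χ.hasCompactSupport.comp_homeomorph (Homeomorph.smulOfNeZero R⁻¹ (inv_ne_zero hR.ne')),
    fun x => pow_le_one₀ χ.nonneg χ.le_one, fun x hx => χ.one_of_mem_closedBall ?_,
    fun x hx => χ.zero_of_le_dist ?_, ?_⟩
  · have : ‖x‖ < R := by simpa using hx
    simp only [mem_closedBall_zero_iff, norm_smul, norm_inv, Real.norm_eq_abs, abs_of_pos hR, χ]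
    rw [inv_mul_le_iff₀ hR]
    linarith
  · have : 2 * R ≤ ‖x‖ := by simpa using hx
    simp only [dist_zero_right, norm_smul, norm_inv, Real.norm_eq_abs, abs_of_pos hR, χ]
    rw [le_inv_mul_iff₀ hR]
    linarith
  · have hgrad : ∀ x, ‖gradient (fun y => χ (R⁻¹ • y)) x‖ ^ 2 =
        (R ^ 2)⁻¹ * ‖gradient χ (R⁻¹ • x)‖ ^ 2 := by
      intro x
      rw [norm_gradient, norm_gradient, fderiv_comp_smul, norm_smul]
      simp [mul_pow, abs_of_pos hR]
    simp only [hgrad]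
    rw [integral_const_mul, Measure.integral_comp_inv_smul_of_nonneg volume
      (fun x => ‖gradient χ x‖ ^ 2) hR.le]
    simp [hR.ne']

section Liouville

variable {w v : E2 → ℝ} {B : E2 → E2 →L[ℝ] E2 →L[ℝ] ℝ}

/-- Weighted Young inequality for a positive semidefinite symmetric form. -/
theorem young_bilin {b : E2 →L[ℝ] E2 →L[ℝ] ℝ} (hsymm : ∀ p q, b p q = b q p)
    (hnonneg : ∀ q, 0 ≤ b q q) {k δ : ℝ} (hk : 0 < k) (hδ : 0 ≤ δ) (s g : ℝ) (p q : E2) :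
    -(δ * (s ^ 2 * (k⁻¹ * b p p))) - g ^ 2 * (k * b q q) / (1 + δ) ≤
      s ^ 2 * (k⁻¹ * b p p) + 2 * s * g * b p q := by
  have h := hnonneg (((1 + δ) * s) • p + (k * g) • q)
  simp only [map_add, map_smul, add_apply, smul_apply,
    smul_eq_mul, hsymm q p] at h
  have h1 : 0 < 1 + δ := by linarith
  have h2 := div_nonneg h (mul_pos hk h1).le
  have h3 : ((1 + δ) * s * ((1 + δ) * s * b p p + k * g * b p q) +
      k * g * ((1 + δ) * s * b p q + k * g * b q q)) / (k * (1 + δ)) =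
      (1 + δ) * (s ^ 2 * (k⁻¹ * b p p)) + 2 * s * g * b p q
        + g ^ 2 * (k * b q q) / (1 + δ) := by
    field_simp
    ring
  rw [h3] at h2
  linarith

/-- The energy density of the test function `arctan (arsinh w)`. -/
def energyDensity (B : E2 → E2 →L[ℝ] E2 →L[ℝ] ℝ) (w : E2 → ℝ) (x : E2) : ℝ :=
  ((1 + arsinh (w x) ^ 2) * √(1 + w x ^ 2))⁻¹ * B x (gradient w x) (gradient w x)

theorem energyDensity_nonneg (hnonneg : ∀ x q, 0 ≤ B x q q) (x : E2) :
    0 ≤ energyDensity B w x :=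
  mul_nonneg (by positivity) (hnonneg _ _)

theorem continuous_energyDensity (hw : ContDiff ℝ 1 w) (hB : Continuous B) :
    Continuous (energyDensity B w) := by
  have hweight : Continuous fun x => (1 + arsinh (w x) ^ 2) * √(1 + w x ^ 2) := by
    have := hw.continuous
    have := hw.arsinh.continuous
    fun_prop
  have hgrad := continuous_gradient hw
  exact (hweight.inv₀ fun x => by positivity).mul ((hB.clm_apply hgrad).clm_apply hgrad)

theorem integrableOn_energyDensity_ball (hw : ContDiff ℝ 1 w) (hB : Continuous B) (r : ℝ) :
    IntegrableOn (energyDensity B w) (ball 0 r) :=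
  ((continuous_energyDensity hw hB).continuousOn.integrableOn_compact
    (isCompact_closedBall 0 r)).mono_set ball_subset_closedBall

/-- The equation `div (B ∇w) = 0` tested with `η² arctan (arsinh w)`. -/
theorem integral_energy_identity (hw : ContDiff ℝ 1 w) (hv : ContDiff ℝ 1 v)
    (hdiv : ∀ x q, B x (gradient w x) q =
      fderiv ℝ v x (ee 0) * q 1 - fderiv ℝ v x (ee 1) * q 0)
    {η : E2 → ℝ} (hη : ContDiff ℝ 1 η) (hηc : HasCompactSupport η) :
    ∫ x, (η x ^ 2 * energyDensity B w x +
      2 * η x * arctan (arsinh (w x)) * B x (gradient w x) (gradient η x)) = 0 := by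
  have hφ : ContDiff ℝ 1 fun x => η x ^ 2 * arctan (arsinh (w x)) :=
    (hη.pow 2).mul (hw.arsinh.arctan)
  have hφc : HasCompactSupport fun x => η x ^ 2 * arctan (arsinh (w x)) := by
    refine HasCompactSupport.mul_right ?_
    simp only [pow_two]
    exact hηc.mul_right
  have hder : ∀ x i, fderiv ℝ (fun x => η x ^ 2 * arctan (arsinh (w x))) x (ee i) =
      η x ^ 2 * ((1 + arsinh (w x) ^ 2) * √(1 + w x ^ 2))⁻¹ * gradient w x i +
        2 * η x * arctan (arsinh (w x)) * gradient η x i := by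
    intro x i
    have h1 := (hη.differentiable one_ne_zero x).hasFDerivAt
    have h2 := (hw.differentiable one_ne_zero x).hasFDerivAt
    have h3 : HasFDerivAt (fun x => η x ^ 2 * arctan (arsinh (w x))) _ x :=
      (h1.pow 2).mul h2.arsinh.arctan
    rw [h3.fderiv, ← fderiv_apply_ee, ← fderiv_apply_ee]
    simp
    ring
  have hint : ∀ i j, Integrable fun x => fderiv ℝ v x (ee i) *
      fderiv ℝ (fun x => η x ^ 2 * arctan (arsinh (w x))) x (ee j) := fun i j =>
    (((hv.continuous_fderiv one_ne_zero).clm_apply continuous_const).mul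
      ((hφ.continuous_fderiv one_ne_zero).clm_apply
        continuous_const)).integrable_of_hasCompactSupport
      (HasCompactSupport.mul_left (hφc.fderiv_apply ℝ (ee j)))
  have hzero := integral_fderiv_mul_fderiv_comm (μ := volume) hv hφ hφc (ee 0) (ee 1)
  rw [← sub_eq_zero, ← integral_sub (hint 0 1) (hint 1 0)] at hzero
  rw [← hzero]
  congr 1 with x
  rw [energyDensity, hder, hder, hdiv, hdiv]
  ring

/-- The energy in a disc is controlled by the energy in the surrounding annulus and the Dirichlet
energy of a cutoff function. -/
theorem energy_hole_filling (hw : ContDiff ℝ 1 w) (hv : ContDiff ℝ 1 v) (hB : Continuous B)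
    (hsymm : ∀ x p q, B x p q = B x q p) (hnonneg : ∀ x q, 0 ≤ B x q q)
    (hdiv : ∀ x q, B x (gradient w x) q =
      fderiv ℝ v x (ee 0) * q 1 - fderiv ℝ v x (ee 1) * q 0)
    {C : ℝ} (hbd : ∀ x q, (1 + arsinh (w x) ^ 2) * √(1 + w x ^ 2) * B x q q ≤ C * ‖q‖ ^ 2)
    {η : E2 → ℝ} (hη : ContDiff ℝ 1 η) (hηc : HasCompactSupport η) {R : ℝ} (hR : 0 < R)
    (hηle : ∀ x, η x ^ 2 ≤ 1) (hη1 : ∀ x ∈ ball (0 : E2) R, η x = 1)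
    (hη0 : ∀ x ∉ ball (0 : E2) (2 * R), η x = 0)
    {δ : ℝ} (hδ : 0 ≤ δ) :
    ∫ x in ball 0 R, energyDensity B w x ≤
      δ * ((∫ x in ball 0 (2 * R), energyDensity B w x) -
        ∫ x in ball 0 R, energyDensity B w x) +
      4 * C * (∫ x, ‖gradient η x‖ ^ 2) / (1 + δ) := by
  have hk : ∀ x, 0 < (1 + arsinh (w x) ^ 2) * √(1 + w x ^ 2) := fun x => by positivity
  have hGc := continuous_gradient hw
  have hNc := continuous_gradient hη
  set Q := energyDensity B w with hQ
  have hQ0 : ∀ x, 0 ≤ Q x := energyDensity_nonneg hnonneg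
  have hQc : Continuous Q := continuous_energyDensity hw hB
  have hNcs : HasCompactSupport fun x => ‖gradient η x‖ ^ 2 := by
    simp only [norm_gradient]
    exact (hηc.fderiv ℝ).comp_left (g := fun l => ‖l‖ ^ 2) (by simp)
  have hNint : Integrable fun x => ‖gradient η x‖ ^ 2 :=
    (hNc.norm.pow 2).integrable_of_hasCompactSupport hNcs
  have hTint : Integrable fun x => η x ^ 2 * Q x +
      2 * η x * arctan (arsinh (w x)) * B x (gradient w x) (gradient η x) := by
    refine Continuous.integrable_of_hasCompactSupport ?_ ?_
    · exact ((hη.continuous.pow 2).mul hQc).add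
        (((hη.continuous.const_mul 2).mul hw.arsinh.arctan.continuous).mul
          ((hB.clm_apply hGc).clm_apply hNc))
    · refine hηc.mono fun x hx => ?_
      contrapose! hx
      simp_all
  have hpt : ∀ x, (ball 0 R).indicator Q x -
      (δ * ((ball 0 (2 * R)).indicator Q x - (ball 0 R).indicator Q x) +
        4 * C / (1 + δ) * ‖gradient η x‖ ^ 2) ≤ η x ^ 2 * Q x +
      2 * η x * arctan (arsinh (w x)) * B x (gradient w x) (gradient η x) := by
    intro x
    have hyoung := young_bilin (hsymm x) (hnonneg x) (hk x) hδ (η x) (arctan (arsinh (w x)))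
      (gradient w x) (gradient η x)
    rw [← energyDensity, ← hQ] at hyoung
    have hg : arctan (arsinh (w x)) ^ 2 ≤ 4 := by
      have h1 := Real.arctan_lt_pi_div_two (arsinh (w x))
      have h2 := Real.neg_pi_div_two_lt_arctan (arsinh (w x))
      have h3 := Real.pi_lt_four
      nlinarith
    have hlast : arctan (arsinh (w x)) ^ 2 * ((1 + arsinh (w x) ^ 2) * √(1 + w x ^ 2) *
        B x (gradient η x) (gradient η x)) / (1 + δ) ≤
        4 * C / (1 + δ) * ‖gradient η x‖ ^ 2 := by
      rw [div_mul_eq_mul_div, mul_assoc 4]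
      refine div_le_div_of_nonneg_right ?_ (by linarith)
      exact mul_le_mul hg (hbd _ _) (mul_nonneg (hk x).le (hnonneg _ _)) (by norm_num)
    by_cases hx1 : x ∈ ball (0 : E2) R
    · have hx2 : x ∈ ball (0 : E2) (2 * R) := ball_subset_ball (by linarith) hx1
      have hN : gradient η x = 0 := by
        have hev : η =ᶠ[nhds x] fun _ => 1 :=
          Filter.eventuallyEq_of_mem (isOpen_ball.mem_nhds hx1) hη1
        rw [hev.gradient_eq, gradient_fun_const]
      simp [Set.indicator_of_mem hx1, Set.indicator_of_mem hx2, hN, hη1 x hx1]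
    · rw [Set.indicator_of_notMem hx1]
      by_cases hx2 : x ∈ ball (0 : E2) (2 * R)
      · rw [Set.indicator_of_mem hx2]
        have h1 := mul_le_mul_of_nonneg_left (mul_le_of_le_one_left (hQ0 x) (hηle x)) hδ
        linarith
      · rw [Set.indicator_of_notMem hx2]
        simp only [hη0 x hx2] at hyoung ⊢
        simp only [ne_eq, OfNat.ofNat_ne_zero, not_false_eq_true, zero_pow, zero_mul, mul_zero,
          neg_zero, add_zero, sub_self, zero_add, zero_sub, Left.neg_nonpos_iff] at hyoung ⊢
        linarith
  have hid := integral_energy_identity hw hv hdiv hη hηc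
  have hi1 := (integrableOn_energyDensity_ball hw hB R).integrable_indicator measurableSet_ball
  have hi2 := (integrableOn_energyDensity_ball hw hB (2 * R)).integrable_indicator measurableSet_ball
  have hi3 := (hi2.sub hi1).const_mul δ
  have hi4 := hNint.const_mul (4 * C / (1 + δ))
  have hle := integral_mono (hi1.sub (hi3.add hi4)) hTint hpt
  rw [integral_sub' hi1 (hi3.add hi4), integral_add' hi3 hi4, integral_const_mul,
    integral_const_mul, integral_sub' hi2 hi1, integral_indicator measurableSet_ball,
    integral_indicator measurableSet_ball, hid, div_mul_eq_mul_div] at hle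
  linarith

/-- A Liouville theorem for `C¹` solutions `w` of a possibly degenerate linear elliptic equation
`div (B ∇w) = 0` in the plane, where the flux `B ∇w` is the rotated gradient of `v`. -/
theorem gradient_eq_zero_of_degenerate_elliptic (hw : ContDiff ℝ 1 w) (hv : ContDiff ℝ 1 v)
    (hB : Continuous B) (hsymm : ∀ x p q, B x p q = B x q p)
    (hpos : ∀ x q, q ≠ 0 → 0 < B x q q)
    (hdiv : ∀ x q, B x (gradient w x) q =
      fderiv ℝ v x (ee 0) * q 1 - fderiv ℝ v x (ee 1) * q 0)
    {C : ℝ} (hC : 0 ≤ C)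
    (hbd : ∀ x q, (1 + arsinh (w x) ^ 2) * √(1 + w x ^ 2) * B x q q ≤ C * ‖q‖ ^ 2) (x : E2) :
    gradient w x = 0 := by
  have hnonneg : ∀ x q, 0 ≤ B x q q := by
    intro x q
    rcases eq_or_ne q 0 with rfl | hq
    · simp
    · exact (hpos x q hq).le
  obtain ⟨D, hD, hcut⟩ := exists_cutoff_energy
  set Q := energyDensity B w with hQ
  have hQ0 : ∀ x, 0 ≤ Q x := energyDensity_nonneg hnonneg
  have hQint : ∀ r, IntegrableOn Q (ball 0 r) := integrableOn_energyDensity_ball hw hB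
  set r := ‖x‖ + 1 with hr
  have hr0 : 0 < r := by positivity
  have hle := nonpos_of_hole_filling (a := fun n => ∫ x in ball 0 (2 ^ n * r), Q x)
    (C := 4 * C * D) (by positivity) (fun n => integral_nonneg hQ0)
    (fun m n hmn => setIntegral_mono_set (hQint _) (Filter.Eventually.of_forall hQ0)
      (ball_subset_ball (by gcongr; norm_num)).eventuallyLE)
    (fun n δ hδ => by
      obtain ⟨η, hη, hηc, hηle, hη1, hη0, hηD⟩ := hcut (2 ^ n * r) (by positivity)
      have := energy_hole_filling hw hv hB hsymm hnonneg hdiv hbd hη hηc (by positivity) hηle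
        hη1 hη0 hδ
      rwa [hηD, ← mul_assoc, ← pow_succ'] at this)
  have hzero : ∫ x in ball 0 r, Q x = 0 :=
    le_antisymm (by simpa using hle) (integral_nonneg hQ0)
  have hae := (setIntegral_eq_zero_iff_of_nonneg_ae (Filter.Eventually.of_forall hQ0)
    (hQint r)).1 hzero
  have hQx : Q x = 0 := Measure.eqOn_open_of_ae_eq hae isOpen_ball
    (continuous_energyDensity hw hB).continuousOn continuousOn_const (by simp [hr])
  by_contra hG
  exact (mul_pos (by positivity) (hpos x _ hG)).ne' hQx

end Liouville

theorem statement8 (f u : E2 → ℝ)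
    (hf : ContDiff ℝ 2 f)
    (hpos : ∀ p q : E2, q ≠ 0 → 0 < Hess f p q)
    (Lam : ℝ) (hLam : 0 < Lam)
    (hgrow : ∀ p : E2, ‖iteratedFDeriv ℝ 2 f p‖ ≤ Lam / (1 + ‖p‖))
    (hu : ContDiff ℝ 2 u) (heq : solves f u)
    (K : ℝ) (hK : 0 < K)
    (hbd : ∀ x : E2, |pd u 0 x| * (Real.log (1 + |pd u 0 x|)) ^ 2 ≤ K * (|pd u 1 x| + 1)) :
    ∃ a b c : ℝ, ∀ x : E2, u x = a * x 0 + b * x 1 + c := by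
  have hf' : ContDiff ℝ 1 (fderiv ℝ f) := hf.fderiv_right (by norm_num)
  have hu' : ContDiff ℝ 1 (fderiv ℝ u) := hu.fderiv_right (by norm_num)
  have hg : ContDiff ℝ 1 (gradient u) :=
    (InnerProductSpace.toDual ℝ E2).symm.contDiff.comp hu'
  have hpd : ∀ i, ContDiff ℝ 1 (pd u i) := fun i => hu'.clm_apply contDiff_const
  have hV : ∀ i, ContDiff ℝ 1 fun y => fderiv ℝ f (gradient u y) (ee i) := fun i =>
    (hf'.comp hg).clm_apply contDiff_const
  let B : E2 → E2 →L[ℝ] E2 →L[ℝ] ℝ := fun x => fderiv ℝ (fderiv ℝ f) (gradient u x)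
  have hB : Continuous B := (hf'.continuous_fderiv one_ne_zero).comp hg.continuous
  have hBsymm : ∀ x p q, B x p q = B x q p := fun x p q =>
    hf.contDiffAt.isSymmSndFDerivAt (by simp) p q
  have hBiter : ∀ x q, B x q q = iteratedFDeriv ℝ 2 f (gradient u x) ![q, q] := fun x q => by
    simp [B, iteratedFDeriv_two_apply]
  have hBpos : ∀ x q, q ≠ 0 → 0 < B x q q := fun x q hq => by
    rw [hBiter]; exact hpos _ q hq
  have hsnd : ∀ x i q, fderiv ℝ (pd u i) x q = fderiv ℝ (fderiv ℝ u) x q (ee i) := by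
    intro x i q
    have : HasFDerivAt (pd u i) _ x :=
      (hu'.differentiable one_ne_zero x).hasFDerivAt.clm_apply (hasFDerivAt_const (ee i) x)
    rw [this.fderiv]
    simp
  -- `∂ⱼ∇u = ∇∂ⱼu` by symmetry of the Hessian of `u`
  have hgrad : ∀ x i, fderiv ℝ (gradient u) x (ee i) = gradient (pd u i) x := by
    intro x i
    refine ext_inner_right ℝ fun q => ?_
    have h1 : fderiv ℝ (gradient u) x = _ :=
      ((InnerProductSpace.toDual ℝ E2).symm.toContinuousLinearEquiv.hasFDerivAt.comp x
        (hu'.differentiable one_ne_zero x).hasFDerivAt).fderiv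
    rw [inner_gradient_left, hsnd, h1]
    have h3 := hu.contDiffAt.isSymmSndFDerivAt (x := x) (by simp) q (ee i)
    rw [h3]
    simp
  have hVd : ∀ x i j, fderiv ℝ (fun y => fderiv ℝ f (gradient u y) (ee i)) x (ee j) =
      B x (gradient (pd u j) x) (ee i) := by
    intro x i j
    have h1 := (hf'.differentiable one_ne_zero (gradient u x)).hasFDerivAt.comp x
      (hg.differentiable one_ne_zero x).hasFDerivAt
    have h2 : HasFDerivAt (fun y => fderiv ℝ f (gradient u y) (ee i)) _ x :=
      h1.clm_apply (hasFDerivAt_const (ee i) x)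
    rw [h2.fderiv, ← hgrad]
    simp [B]
  have hsol : ∀ x, B x (gradient (pd u 0) x) (ee 0) + B x (gradient (pd u 1) x) (ee 1) = 0 := by
    intro x
    have := heq x
    rwa [Fin.sum_univ_two, hVd, hVd] at this
  have hdiv : ∀ x q, B x (gradient (pd u 0) x) q =
      fderiv ℝ (fun y => fderiv ℝ f (gradient u y) (ee 1)) x (ee 0) * q 1 -
        fderiv ℝ (fun y => fderiv ℝ f (gradient u y) (ee 1)) x (ee 1) * q 0 := by
    intro x q
    rw [hVd, hVd]
    conv_lhs => rw [eq_coord_smul_ee q]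
    simp only [map_add, map_smul, smul_eq_mul]
    linear_combination q 0 * hsol x
  have hweight : ∀ x q, (1 + arsinh (pd u 0 x) ^ 2) * √(1 + pd u 0 x ^ 2) * B x q q ≤
      ((11 + 7 * K) * Lam) * ‖q‖ ^ 2 := by
    intro x q
    have h1 : B x q q ≤ Lam / (1 + ‖gradient u x‖) * ‖q‖ ^ 2 := by
      rw [hBiter]
      refine (le_abs_self _).trans ?_
      refine ((iteratedFDeriv ℝ 2 f (gradient u x)).le_opNorm _).trans ?_
      simp only [Fin.prod_univ_two, Matrix.cons_val_zero, Matrix.cons_val_one, ← pow_two]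
      gcongr
      exact hgrow _
    have hB0 : 0 ≤ B x q q := by
      rcases eq_or_ne q 0 with rfl | hq
      · simp
      · exact (hBpos x q hq).le
    have h2 : |pd u 1 x| ≤ ‖gradient u x‖ := by
      rw [pd, fderiv_apply_ee]
      exact PiLp.norm_apply_le (gradient u x) 1
    have h3 : (1 + arsinh (pd u 0 x) ^ 2) * √(1 + pd u 0 x ^ 2) ≤
        (11 + 7 * K) * (1 + ‖gradient u x‖) := by
      have := one_add_arsinh_sq_mul_sqrt_le (pd u 0 x)
      have := hbd x
      have := mul_le_mul_of_nonneg_left h2 hK.le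
      nlinarith [norm_nonneg (gradient u x)]
    calc _ ≤ (11 + 7 * K) * (1 + ‖gradient u x‖) *
          (Lam / (1 + ‖gradient u x‖) * ‖q‖ ^ 2) :=
          mul_le_mul h3 h1 hB0 (by positivity)
      _ = _ := by
        have : 1 + ‖gradient u x‖ ≠ 0 := by positivity
        field_simp
  have hG0 : ∀ x, gradient (pd u 0) x = 0 := fun x =>
    gradient_eq_zero_of_degenerate_elliptic (hpd 0) (hV 1) hB hBsymm hBpos hdiv (by positivity)
      hweight x
  have hG1 : ∀ x, gradient (pd u 1) x = 0 := by
    intro x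
    have hcross : gradient (pd u 1) x 0 = 0 := by
      have h := hu.contDiffAt.isSymmSndFDerivAt (x := x) (by simp) (ee 0) (ee 1)
      rw [← fderiv_apply_ee, hsnd, h, ← hsnd, fderiv_apply_ee, hG0]
      simp
    have hs := hsol x
    rw [hG0, eq_coord_smul_ee (gradient (pd u 1) x), hcross] at hs
    simp only [map_zero, zero_apply, zero_smul, zero_add, map_smul, smul_apply, smul_eq_mul,
      mul_eq_zero] at hs
    have hee : ee 1 ≠ 0 := by simp [ee]
    have h1 := hs.resolve_right (hBpos x _ hee).ne'
    rw [eq_coord_smul_ee (gradient (pd u 1) x), hcross, h1]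
    simp
  have hconst : ∀ i x, pd u i x = pd u i 0 := by
    intro i x
    refine is_const_of_fderiv_eq_zero ((hpd i).differentiable one_ne_zero) (fun y => ?_) x 0
    rw [← norm_eq_zero, ← norm_gradient, norm_eq_zero]
    fin_cases i
    exacts [hG0 y, hG1 y]
  refine ⟨pd u 0 0, pd u 1 0, u 0, fun x => ?_⟩
  let l : E2 →L[ℝ] ℝ := fderiv ℝ u 0
  have hfd : ∀ y, fderiv ℝ u y = l := by
    intro y
    ext q
    rw [eq_coord_smul_ee q]
    have h0 := hconst 0 y
    have h1 := hconst 1 y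
    simp only [pd] at h0 h1
    simp [l, h0, h1]
  have hsub : ∀ y, fderiv ℝ (fun z => u z - l z) y = 0 := by
    intro y
    rw [fderiv_fun_sub (hu.differentiable two_ne_zero y) l.differentiableAt, hfd]
    simp
  have h : u x - l x = u 0 - l 0 := is_const_of_fderiv_eq_zero
    ((hu.differentiable two_ne_zero).sub l.differentiable) hsub x 0
  have hl : l x = x 0 * pd u 0 0 + x 1 * pd u 1 0 := by
    conv_lhs => rw [eq_coord_smul_ee x]
    simp [l, pd]
  have h0 : l 0 = 0 := map_zero l
  linarith
end
end
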